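/- Let K be a field with a discrete valuation v, valuation ring O_v = {x ∈ K : x = 0 or v(x) ≥ 0}, maximal ideal m_v = {x ∈ K : x = 0 or v(x) > 0}, and residue field k_v = O_v/m_v. Let π, α, b, c ∈ K with v(π) = 1, v(α) = v(b) = v(c) = 0, and suppose the image of α in k_v is not a square in k_v. Then there are no y, z ∈ K satisfying y² = π⁻³(z² − α)(z² − α − πb)(z² − α − πc). -/

import Mathlib

section

variable {K : Type*} [Field K] {v : K → ℤ}

theorem val_neg (hmul : ∀ x y : K, x ≠ 0 → y ≠ 0 → v (x * y) = v x + v y)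
    {x : K} (hx : x ≠ 0) : v (-x) = v x := by
  have h := hmul x x hx hx
  have h' := hmul (-x) (-x) (neg_ne_zero.2 hx) (neg_ne_zero.2 hx)
  rw [neg_mul_neg] at h'
  omega

theorem val_add_of_lt (hmul : ∀ x y : K, x ≠ 0 → y ≠ 0 → v (x * y) = v x + v y)
    (hultra : ∀ x y : K, x ≠ 0 → y ≠ 0 → x + y ≠ 0 → min (v x) (v y) ≤ v (x + y))
    {x y : K} (hx : x ≠ 0) (hy : y ≠ 0) (h : v x < v y) :
    x + y ≠ 0 ∧ v (x + y) = v x := by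
  have hs : x + y ≠ 0 := by
    intro h0
    rw [eq_neg_of_add_eq_zero_left h0, val_neg hmul hy] at h
    exact lt_irrefl _ h
  have h₁ := hultra x y hx hy hs
  have h₂ := hultra (x + y) (-y) hs (neg_ne_zero.2 hy) (by simpa using hx)
  rw [add_neg_cancel_right, val_neg hmul hy] at h₂
  exact ⟨hs, by omega⟩

theorem val_sub_of_lt (hmul : ∀ x y : K, x ≠ 0 → y ≠ 0 → v (x * y) = v x + v y)
    (hultra : ∀ x y : K, x ≠ 0 → y ≠ 0 → x + y ≠ 0 → min (v x) (v y) ≤ v (x + y))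
    {x y : K} (hx : x ≠ 0) (hy : y ≠ 0) (h : v x < v y) :
    x - y ≠ 0 ∧ v (x - y) = v x := by
  rw [sub_eq_add_neg]
  exact val_add_of_lt hmul hultra hx (neg_ne_zero.2 hy) (by rwa [val_neg hmul hy])

/-- If a unit `α` is not a square in the residue field, then `z ^ 2 - α` is nonzero, of even
nonpositive valuation. -/
theorem val_sq_sub_of_nonsquare (hmul : ∀ x y : K, x ≠ 0 → y ≠ 0 → v (x * y) = v x + v y)
    (hultra : ∀ x y : K, x ≠ 0 → y ≠ 0 → x + y ≠ 0 → min (v x) (v y) ≤ v (x + y))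
    {α : K} (hα : α ≠ 0) (hvα : v α = 0)
    (hns : ¬ ∃ t : K, (t = 0 ∨ 0 ≤ v t) ∧ (α - t ^ 2 = 0 ∨ 0 < v (α - t ^ 2))) (z : K) :
    z ^ 2 - α ≠ 0 ∧ v (z ^ 2 - α) ≤ 0 ∧ Even (v (z ^ 2 - α)) := by
  rcases eq_or_ne z 0 with rfl | hz
  · simp [hα, val_neg hmul hα, hvα]
  have hz2 : z ^ 2 ≠ 0 := pow_ne_zero 2 hz
  have hvz2 : v (z ^ 2) = v z + v z := by rw [sq, hmul z z hz hz]
  rcases lt_or_ge (v z) 0 with hneg | hint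
  · obtain ⟨h0, h1⟩ := val_sub_of_lt hmul hultra hz2 hα (by omega)
    exact ⟨h0, by omega, v z, by omega⟩
  · have hnot : ¬ (α - z ^ 2 = 0 ∨ 0 < v (α - z ^ 2)) := fun h => hns ⟨z, Or.inr hint, h⟩
    rw [not_or, not_lt] at hnot
    have h0 : z ^ 2 - α ≠ 0 := fun h => hnot.1 (by rw [← neg_sub, h, neg_zero])
    have hle := hnot.2
    rw [← neg_sub, val_neg hmul h0] at hle
    have hge := hultra (z ^ 2) (-α) hz2 (neg_ne_zero.2 hα) (by rwa [← sub_eq_add_neg])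
    rw [← sub_eq_add_neg, val_neg hmul hα] at hge
    exact ⟨h0, hle, 0, by omega⟩

end

/-- Let `K` be a field with a discrete valuation `v` (a surjective
homomorphism `Kˣ → ℤ`, here encoded as a function on nonzero elements of `K`, satisfying
the ultrametric inequality), with valuation ring `O_v = {x : x = 0 ∨ v x ≥ 0}` and
maximal ideal `m_v = {x : x = 0 ∨ v x > 0}`. Let `π, α, b, c ∈ K` with `v π = 1`,
`v α = v b = v c = 0`, and suppose the image of `α` in the residue field `O_v/m_v` is not
a square (i.e. there is no `t ∈ O_v` with `α - t² ∈ m_v`). Then no `y, z ∈ K` satisfy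
`y² = π⁻³(z² − α)(z² − α − πb)(z² − α − πc)`. -/
theorem no_points_at_pi (K : Type*) [Field K] (v : K → ℤ)
    (hmul : ∀ x y : K, x ≠ 0 → y ≠ 0 → v (x * y) = v x + v y)
    (hsurj : ∀ n : ℤ, ∃ x : K, x ≠ 0 ∧ v x = n)
    (hultra : ∀ x y : K, x ≠ 0 → y ≠ 0 → x + y ≠ 0 → min (v x) (v y) ≤ v (x + y))
    (π α b c : K) (hπ : π ≠ 0) (hα : α ≠ 0) (hb : b ≠ 0) (hc : c ≠ 0)
    (hvπ : v π = 1) (hvα : v α = 0) (hvb : v b = 0) (hvc : v c = 0)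
    (hns : ¬ ∃ t : K, (t = 0 ∨ 0 ≤ v t) ∧ (α - t ^ 2 = 0 ∨ 0 < v (α - t ^ 2))) :
    ¬ ∃ y z : K,
      y ^ 2 = π⁻¹ ^ 3 * ((z ^ 2 - α) * (z ^ 2 - α - π * b) * (z ^ 2 - α - π * c)) := by
  rintro ⟨y, z, h⟩
  obtain ⟨h0, hle, m, hm⟩ := val_sq_sub_of_nonsquare hmul hultra hα hvα hns z
  have hshift : ∀ d : K, d ≠ 0 → v d = 0 →
      z ^ 2 - α - π * d ≠ 0 ∧ v (z ^ 2 - α - π * d) = v (z ^ 2 - α) := fun d hd hvd =>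
    val_sub_of_lt hmul hultra h0 (mul_ne_zero hπ hd) (by rw [hmul π d hπ hd]; omega)
  obtain ⟨hb0, hvb'⟩ := hshift b hb hvb
  obtain ⟨hc0, hvc'⟩ := hshift c hc hvc
  have hprod := mul_ne_zero (mul_ne_zero h0 hb0) hc0
  have hy : y ≠ 0 := by
    rintro rfl
    exact mul_ne_zero (pow_ne_zero 3 (inv_ne_zero hπ)) hprod (by rw [← h]; simp)
  have heq : π * (π * y) * (π * y) =
      (z ^ 2 - α) * (z ^ 2 - α - π * b) * (z ^ 2 - α - π * c) := by
    calc π * (π * y) * (π * y) = π ^ 3 * y ^ 2 := by ring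
      _ = _ := by rw [h, ← mul_assoc, ← mul_pow, mul_inv_cancel₀ hπ, one_pow, one_mul]
  have hπy := mul_ne_zero hπ hy
  have hv := congrArg v heq
  rw [hmul _ _ (mul_ne_zero hπ hπy) hπy, hmul _ _ hπ hπy, hmul _ _ (mul_ne_zero h0 hb0) hc0,
    hmul _ _ h0 hb0] at hv
  omega
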